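/- Let k ≥ 2 be an integer and let α > 1/k, r > 0 and 0 < p ≤ (k-1)/k be real constants with r < r_cr = -α/ln(1-p). Let N denote the number of satisfying assignments of a random instance of RB(k,n,α,r,p). Then E[N²]/E[N]² → 1 as n → ∞. -/

import Mathlib

namespace RB

/-- A (raw) constraint over `n` variables with common domain `Fin d`:
a scope (set of variables) together with a set of forbidden tuples,
i.e. forbidden functions from the scope to the domain. -/
abbrev Constraint (n d : ℕ) : Type := Σ s : Finset (Fin n), Finset (↥s → Fin d)

/-- A constraint of model RB: scope of exactly `k` variables and exactly `q` forbidden tuples. -/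
abbrev ValidConstraint (k n d q : ℕ) : Type :=
  {c : Constraint n d // c.1.card = k ∧ c.2.card = q}

/-- An instance of model RB: a sequence of `m` constraints (chosen with repetition). -/
abbrev Instance (k n d q m : ℕ) : Type := Fin m → ValidConstraint k n d q

/-- An assignment satisfies a constraint iff the tuple it induces on the scope is not forbidden. -/
def satisfies {n d : ℕ} (a : Fin n → Fin d) (c : Constraint n d) : Prop :=
  (fun i : ↥c.1 => a i.1) ∉ c.2

/-- An assignment satisfies an instance iff it satisfies all its constraints. -/
def satInstance {k n d q m : ℕ} (a : Fin n → Fin d) (P : Instance k n d q m) : Prop :=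
  ∀ i : Fin m, satisfies a (P i).1

open scoped Classical in
/-- The probability (uniform over instances, i.e. constraints chosen independently,
uniformly and with repetition) that a random instance is satisfiable. -/
noncomputable def prSat (k n d q m : ℕ) : ℝ :=
  ((Finset.univ.filter fun P : Instance k n d q m =>
      ∃ a : Fin n → Fin d, satInstance a P).card : ℝ)
    / (Fintype.card (Instance k n d q m))

/-- Domain size `d = ⌈n^α⌉`. -/
noncomputable def dOf (α : ℝ) (n : ℕ) : ℕ := ⌈(n : ℝ) ^ α⌉₊

/-- Number of constraints `m = ⌈r · n · ln n⌉`. -/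
noncomputable def mOf (r : ℝ) (n : ℕ) : ℕ := ⌈r * n * Real.log n⌉₊

/-- Number of forbidden tuples `q = ⌈p · d^k⌉`. -/
noncomputable def qOf (p : ℝ) (k d : ℕ) : ℕ := ⌈p * (d : ℝ) ^ k⌉₊

/-- Probability that a random instance of `RB(k,n,α,r,p)` is satisfiable. -/
noncomputable def prSatRB (k : ℕ) (α r p : ℝ) (n : ℕ) : ℝ :=
  prSat k n (dOf α n) (qOf p k (dOf α n)) (mOf r n)

end RB

namespace RB

open scoped Classical in
/-- The number of satisfying assignments (solutions) of an instance. -/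
noncomputable def numSolutions {k n d q m : ℕ} (P : Instance k n d q m) : ℕ :=
  (Finset.univ.filter fun a : Fin n → Fin d => satInstance a P).card

/-- The first moment `E[N]` of the number of solutions of a random instance
(uniform over instances, i.e. constraints chosen independently, uniformly and
with repetition). -/
noncomputable def expN (k n d q m : ℕ) : ℝ :=
  (∑ P : Instance k n d q m, (numSolutions P : ℝ)) / (Fintype.card (Instance k n d q m))

/-- The second moment `E[N²]` of the number of solutions of a random instance. -/
noncomputable def expNsq (k n d q m : ℕ) : ℝ :=
  (∑ P : Instance k n d q m, (numSolutions P : ℝ) ^ 2) / (Fintype.card (Instance k n d q m))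

open scoped Classical in
/-- The expected number of solutions `E_f[N] = E[N·1_{t ∈ S}] / Pr[t ∈ S]` of instances
forced to admit the assignment `t` as a solution, i.e. of the uniform model conditioned
on the event that `t` is a solution. -/
noncomputable def expNForced (k n d q m : ℕ) (t : Fin n → Fin d) : ℝ :=
  ((∑ P : Instance k n d q m, if satInstance t P then (numSolutions P : ℝ) else 0)
      / (Fintype.card (Instance k n d q m)))
    / (((Finset.univ.filter fun P : Instance k n d q m => satInstance t P).card : ℝ)
      / (Fintype.card (Instance k n d q m)))

end RB


namespace RB
open Finset

open scoped Classical in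
lemma card_valid (k n d q : ℕ) (T : ∀ s : Finset (Fin n), Finset (↥s → Fin d)) :
    (univ.filter fun c : ValidConstraint k n d q => Disjoint c.1.2 (T c.1.1)).card
      = ∑ s ∈ powersetCard k (univ : Finset (Fin n)), (d ^ k - (T s).card).choose q := by
  have h : ∀ s ∈ powersetCard k (univ : Finset (Fin n)), (d ^ k - (T s).card).choose q
      = (powersetCard q (univ \ T s)).card := by
    intro s hs
    rw [mem_powersetCard] at hs
    rw [card_powersetCard, card_sdiff_of_subset (subset_univ _), card_univ]
    simp [hs.2]
  rw [sum_congr rfl h, ← card_sigma]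
  refine Finset.card_bij (fun c _ => c.1) ?_ ?_ ?_
  · rintro ⟨⟨s, F⟩, h1, h2⟩ hc
    simp only [mem_filter, mem_univ, true_and] at hc
    simp only [mem_sigma, mem_powersetCard, subset_univ, true_and]
    exact ⟨h1, by simpa [subset_sdiff] using hc, h2⟩
  · intro a _ b _ hab
    exact Subtype.ext hab
  · rintro ⟨s, F⟩ hc
    simp only [mem_sigma, mem_powersetCard, subset_univ, true_and] at hc
    refine ⟨⟨⟨s, F⟩, hc.1, hc.2.2⟩, ?_, rfl⟩
    simpa [subset_sdiff] using hc.2.1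

lemma card_validConstraint (k n d q : ℕ) :
    Fintype.card (ValidConstraint k n d q) = n.choose k * (d ^ k).choose q := by
  classical
  have := card_valid k n d q (fun _ => ∅)
  simpa using this

open scoped Classical in
lemma card_sat1 (k n d q : ℕ) (a : Fin n → Fin d) :
    (univ.filter fun c : ValidConstraint k n d q => satisfies a c.1).card
      = n.choose k * (d ^ k - 1).choose q := by
  have := card_valid k n d q (fun s => {fun i => a i.1})
  have h2 : (univ.filter fun c : ValidConstraint k n d q => satisfies a c.1)
    = (univ.filter fun c : ValidConstraint k n d q => Disjoint c.1.2
      ((fun s => {fun i => a i.1} : ∀ s : Finset (Fin n), Finset (↥s → Fin d)) c.1.1)) := by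
    ext c
    simp only [mem_filter, mem_univ, true_and]
    simp [satisfies]
  rw [h2, this]
  simp

/-- agreement set -/
def agr {n d : ℕ} (a b : Fin n → Fin d) : Finset (Fin n) := univ.filter fun i => a i = b i

open scoped Classical in
lemma card_sat2 (k n d q : ℕ) (a b : Fin n → Fin d) :
    (univ.filter fun c : ValidConstraint k n d q => satisfies a c.1 ∧ satisfies b c.1).card
      = (agr a b).card.choose k * (d ^ k - 1).choose q
        + (n.choose k - (agr a b).card.choose k) * (d ^ k - 2).choose q := by
  have := card_valid k n d q (fun s => {fun i => a i.1, fun i => b i.1})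
  have h2 : (univ.filter fun c : ValidConstraint k n d q => satisfies a c.1 ∧ satisfies b c.1)
    = (univ.filter fun c : ValidConstraint k n d q => Disjoint c.1.2
      ((fun s => {fun i => a i.1, fun i => b i.1} : ∀ s : Finset (Fin n), Finset (↥s → Fin d)) c.1.1)) := by
    ext c
    simp only [mem_filter, mem_univ, true_and]
    simp [satisfies]
  rw [h2, this]
  have hsub : powersetCard k (agr a b) ⊆ powersetCard k (univ : Finset (Fin n)) :=
    powersetCard_mono (subset_univ _)
  rw [← sum_sdiff hsub, add_comm]
  congr 1
  · rw [← card_powersetCard, ← smul_eq_mul, ← sum_const]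
    apply sum_congr rfl
    intro s hs
    rw [mem_powersetCard] at hs
    have : (fun i : s => a i.1) = (fun i : s => b i.1) := by
      funext i
      have := hs.1 i.2
      simpa [agr] using this
    simp [this]
  · have : n.choose k - (agr a b).card.choose k
      = (powersetCard k (univ : Finset (Fin n)) \ powersetCard k (agr a b)).card := by
      rw [card_sdiff_of_subset hsub]; simp
    rw [this, ← smul_eq_mul, ← sum_const]
    apply sum_congr rfl
    intro s hs
    rw [mem_sdiff, mem_powersetCard, mem_powersetCard] at hs
    have : (fun i : s => a i.1) ≠ (fun i : s => b i.1) := by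
      intro h
      apply hs.2
      refine ⟨?_, hs.1.2⟩
      intro i hi
      have := congrFun h ⟨i, hi⟩
      simpa [agr] using this
    rw [card_pair this]

open scoped Classical in
lemma card_inst {k n d q : ℕ} (m : ℕ) (Q : ValidConstraint k n d q → Prop) :
    (univ.filter fun P : Instance k n d q m => ∀ i, Q (P i)).card
      = (univ.filter fun c => Q c).card ^ m := by
  have := Fintype.card_piFinset_const (univ.filter fun c => Q c) m
  rw [← this]
  congr 1
  ext P
  simp [Fintype.mem_piFinset]

lemma sum_num (k n d q m : ℕ) :
    ∑ P : Instance k n d q m, (numSolutions P : ℝ)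
      = d ^ n * ((n.choose k * (d ^ k - 1).choose q : ℕ) : ℝ) ^ m := by
  classical
  have h : ∀ P : Instance k n d q m, (numSolutions P : ℝ)
      = ∑ a : Fin n → Fin d, if satInstance a P then (1:ℝ) else 0 := by
    intro P
    simp [numSolutions]
  simp_rw [h]
  rw [sum_comm]
  have h2 : ∀ a : Fin n → Fin d, (∑ P : Instance k n d q m, if satInstance a P then (1:ℝ) else 0)
     = ((n.choose k * (d ^ k - 1).choose q : ℕ) : ℝ) ^ m := by
    intro a
    have := card_inst m (fun c : ValidConstraint k n d q => satisfies a c.1)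
    rw [card_sat1] at this
    rw [← Nat.cast_pow, ← this, sum_boole]
    congr 2
    ext P
    simp only [mem_filter, mem_univ, true_and]
    rfl
  simp_rw [h2]
  simp

lemma sum_numsq (k n d q m : ℕ) :
    ∑ P : Instance k n d q m, (numSolutions P : ℝ) ^ 2
      = ∑ a : Fin n → Fin d, ∑ b : Fin n → Fin d,
        (((agr a b).card.choose k * (d ^ k - 1).choose q
        + (n.choose k - (agr a b).card.choose k) * (d ^ k - 2).choose q : ℕ) : ℝ) ^ m := by
  classical
  have h : ∀ P : Instance k n d q m, (numSolutions P : ℝ) ^ 2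
      = ∑ a : Fin n → Fin d, ∑ b : Fin n → Fin d,
        if satInstance a P ∧ satInstance b P then (1:ℝ) else 0 := by
    intro P
    have : (numSolutions P : ℝ)
      = ∑ a : Fin n → Fin d, if satInstance a P then (1:ℝ) else 0 := by
      simp [numSolutions]
    rw [this, sq, sum_mul_sum]
    refine sum_congr rfl fun a _ => sum_congr rfl fun b _ => ?_
    by_cases h1 : satInstance a P <;> by_cases h2 : satInstance b P <;> simp [h1, h2]
  simp_rw [h]
  rw [sum_comm]
  refine sum_congr rfl fun a _ => ?_
  rw [sum_comm]
  refine sum_congr rfl fun b _ => ?_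
  have := card_inst m (fun c : ValidConstraint k n d q => satisfies a c.1 ∧ satisfies b c.1)
  have h2 := card_sat2 k n d q a b
  rw [← Nat.cast_pow, ← h2]
  have h3 : (univ.filter fun c : ValidConstraint k n d q => satisfies a c.1 ∧ satisfies b c.1).card ^ m
    = (univ.filter fun P : Instance k n d q m => satInstance a P ∧ satInstance b P).card := by
    refine Eq.trans ?_ (this.symm.trans ?_)
    · congr!
    congr 1
    ext P
    simp only [mem_filter, mem_univ, true_and]
    simp [satInstance, forall_and]
  rw [sum_boole, ← h3]

lemma card_instance (k n d q m : ℕ) :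
    Fintype.card (Instance k n d q m) = (n.choose k * (d ^ k).choose q) ^ m := by
  rw [← card_validConstraint]; simp

lemma sq_le (k n d q m : ℕ) (h : 0 < Fintype.card (Instance k n d q m)) :
    expN k n d q m ^ 2 ≤ expNsq k n d q m := by
  unfold expN expNsq
  have hc : (0:ℝ) < Fintype.card (Instance k n d q m) := by exact_mod_cast h
  rw [div_pow, div_le_div_iff₀ (by positivity) hc]
  have := sq_sum_le_card_mul_sum_sq (s := univ) (f := fun P : Instance k n d q m => (numSolutions P : ℝ))
  rw [card_univ] at this
  nlinarith

lemma choose_sub_one (D q : ℕ) (hq : q < D) :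
    ((D - 1).choose q : ℝ) = (1 - q / D) * D.choose q := by
  obtain ⟨D, rfl⟩ : ∃ E, D = E + 1 := ⟨D - 1, by omega⟩
  have := Nat.choose_mul_succ_eq D q
  have h2 : ((D.choose q : ℝ)) * (D + 1) = (D+1).choose q * (D + 1 - q) := by
    have h3 : ((D + 1 - q : ℕ) : ℝ) = D + 1 - q := by
      rw [Nat.cast_sub hq.le]; push_cast; ring
    rw [← h3]; exact_mod_cast this
  have : (D:ℝ) + 1 ≠ 0 := by positivity
  simp only [Nat.add_sub_cancel]
  push_cast
  field_simp
  linarith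

lemma choose_sub_two (D q : ℕ) (hq : q < D) (hD : 2 ≤ D) :
    ((D - 2).choose q : ℝ) ≤ (1 - q / D) ^ 2 * D.choose q := by
  have hDD : (2:ℝ) ≤ D := by exact_mod_cast hD
  have hqD : (q:ℝ) + 1 ≤ D := by exact_mod_cast hq
  have hu : 0 ≤ 1 - (q:ℝ) / D := by
    rw [sub_nonneg, div_le_one (by linarith)]; linarith
  rcases Nat.lt_or_ge q (D - 1) with h | h
  · have h1 := choose_sub_one (D - 1) q h
    rw [choose_sub_one D q hq] at h1
    have : D - 1 - 1 = D - 2 := by omega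
    rw [this] at h1
    rw [h1, sq, mul_assoc]
    apply mul_le_mul_of_nonneg_right _ (by positivity)
    have : ((D - 1 : ℕ) : ℝ) = D - 1 := by rw [Nat.cast_sub (by omega)]; simp
    rw [this]
    apply sub_le_sub_left
    apply div_le_div_of_nonneg_left <;> first | positivity | linarith
  · rw [Nat.choose_eq_zero_of_lt (by omega)]
    simp only [Nat.cast_zero]
    positivity

lemma agr_choose_le {n d : ℕ} (k : ℕ) (a b : Fin n → Fin d) :
    (agr a b).card.choose k ≤ n.choose k :=
  Nat.choose_le_choose k (by simpa using card_le_univ (agr a b))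

lemma expN_eq (k n d q m : ℕ) (hk : k ≤ n) (hq : q < d ^ k) :
    expN k n d q m = d ^ n * (1 - (q:ℝ) / (d ^ k : ℕ)) ^ m := by
  unfold expN
  have h0 : (0:ℝ) < n.choose k := by exact_mod_cast Nat.choose_pos hk
  have h1 : (0:ℝ) < (d ^ k).choose q := by exact_mod_cast Nat.choose_pos hq.le
  rw [sum_num, card_instance]
  rw [Nat.cast_mul, choose_sub_one _ _ hq, Nat.cast_pow (_ * _), Nat.cast_mul, mul_div_assoc, ← div_pow]
  congr 2
  field_simp

lemma expNsq_le (k n d q m : ℕ) (hk : k ≤ n) (hq : q < d ^ k) (hD : 2 ≤ d ^ k) (u : ℝ)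
    (hu : u = 1 - (q:ℝ) / (d ^ k : ℕ)) (hu0 : 0 < u) :
    expNsq k n d q m ≤ u ^ (2 * m) * ∑ a : Fin n → Fin d, ∑ b : Fin n → Fin d,
      (1 + ((agr a b).card.choose k : ℝ) / n.choose k * (1 / u - 1)) ^ m := by
  unfold expNsq
  have h0 : (0:ℝ) < n.choose k := by exact_mod_cast Nat.choose_pos hk
  have h1 : (0:ℝ) < (d ^ k).choose q := by exact_mod_cast Nat.choose_pos hq.le
  rw [sum_numsq, card_instance, sum_div, mul_sum]
  refine sum_le_sum fun a _ => ?_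
  rw [sum_div, mul_sum]
  refine sum_le_sum fun b _ => ?_
  rw [Nat.cast_pow (_ * _), ← div_pow, pow_mul, ← mul_pow]
  apply pow_le_pow_left₀ (by positivity)
  have h2 := choose_sub_two _ _ hq hD
  have h3 := choose_sub_one _ _ hq
  rw [← hu] at h2 h3
  have h4 := agr_choose_le k a b
  have h4' : ((agr a b).card.choose k : ℝ) ≤ n.choose k := by exact_mod_cast h4
  rw [Nat.cast_add, Nat.cast_mul, Nat.cast_mul, Nat.cast_mul, Nat.cast_sub h4, h3]
  rw [div_le_iff₀ (by positivity)]
  have : u ^ 2 * (1 + ((agr a b).card.choose k : ℝ) / n.choose k * (1 / u - 1)) *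
      (n.choose k * (d ^ k).choose q) = ((agr a b).card.choose k : ℝ) * (u * (d ^ k).choose q)
      + (n.choose k - (agr a b).card.choose k) * (u ^ 2 * (d ^ k).choose q) := by
    field_simp; ring
  rw [this]
  gcongr

lemma card_agree_on {n d : ℕ} (a : Fin n → Fin d) (S : Finset (Fin n)) :
    (univ.filter fun b : Fin n → Fin d => S ⊆ agr a b).card = d ^ (n - S.card) := by
  classical
  have : (univ.filter fun b : Fin n → Fin d => S ⊆ agr a b)
      = Fintype.piFinset (fun i => if i ∈ S then ({a i} : Finset (Fin d)) else univ) := by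
    ext b
    simp only [mem_filter, mem_univ, true_and, Fintype.mem_piFinset]
    constructor
    · intro h i
      split_ifs with hi
      · have := h hi
        simp [agr] at this; simp [this]
      · simp
    · intro h i hi
      have := h i
      simp [hi] at this
      simp [agr, this]
  rw [this, Fintype.card_piFinset]
  have : ∀ i, (if i ∈ S then ({a i} : Finset (Fin d)) else univ).card = if i ∈ S then 1 else d := by
    intro i; split_ifs <;> simp
  simp_rw [this]
  rw [prod_ite]
  simp only [prod_const, one_pow, one_mul]
  congr 1
  have := card_compl S
  rw [Fintype.card_fin] at this
  rw [← this]; congr 1; ext i; simp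

lemma card_agr_eq {n d : ℕ} (a : Fin n → Fin d) (s : ℕ) :
    (univ.filter fun b : Fin n → Fin d => (agr a b).card = s).card ≤ n.choose s * d ^ (n - s) := by
  classical
  calc _ ≤ ((powersetCard s (univ : Finset (Fin n))).biUnion fun S =>
        (univ.filter fun b : Fin n → Fin d => S ⊆ agr a b)).card := by
        apply card_le_card
        intro b hb
        simp only [mem_filter, mem_univ, true_and, mem_biUnion, mem_powersetCard] at hb ⊢
        exact ⟨agr a b, ⟨subset_univ _, hb⟩, subset_rfl⟩
    _ ≤ ∑ S ∈ powersetCard s (univ : Finset (Fin n)), d ^ (n - s) := by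
        refine card_biUnion_le.trans (sum_le_sum fun S hS => ?_)
        rw [card_agree_on, (mem_powersetCard.1 hS).2]
    _ = _ := by simp

/-- splitting: -/
lemma sum_split {n d : ℕ} (hd : 0 < d) (f : ℕ → ℝ) (M : ℝ) (ρ : ℝ) (hρ : 0 ≤ ρ) (hρ1 : ρ < 1)
    (hM : 0 ≤ M) (B : ℕ → Prop)
    (hf1 : ∀ s ≤ n, B s → f s ≤ M)
    (hf2 : ∀ s ≤ n, ¬ B s → 1 ≤ s ∧ 0 ≤ f s ∧ (n.choose s : ℝ) / d ^ s * f s ≤ ρ ^ s) :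
    ∑ a : Fin n → Fin d, ∑ b : Fin n → Fin d, f (agr a b).card
      ≤ (d:ℝ) ^ (2 * n) * (M + ρ / (1 - ρ)) := by
  classical
  have hdR : (0:ℝ) < d := by exact_mod_cast hd
  have key : ∀ a : Fin n → Fin d, ∑ b : Fin n → Fin d, f (agr a b).card
      ≤ (d:ℝ) ^ n * (M + ρ / (1 - ρ)) := by
    intro a
    have hle : ∀ b : Fin n → Fin d, (agr a b).card ≤ n := fun b => by
      simpa using card_le_univ (agr a b)
    rw [← sum_filter_add_sum_filter_not univ (fun b : Fin n → Fin d => B (agr a b).card)]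
    rw [mul_add]
    apply add_le_add
    · calc _ ≤ ∑ b ∈ univ.filter (fun b : Fin n → Fin d => B (agr a b).card), M := by
            refine sum_le_sum fun b hb => ?_
            exact hf1 _ (hle b) (mem_filter.1 hb).2
        _ ≤ ∑ b : Fin n → Fin d, M :=
            sum_le_sum_of_subset_of_nonneg (filter_subset _ _) (fun _ _ _ => hM)
        _ = _ := by simp
    · have hmap : ∀ b ∈ univ.filter (fun b : Fin n → Fin d => ¬ B (agr a b).card),
          (agr a b).card ∈ (range (n+1)).filter (fun s => ¬ B s) := by
        intro b hb
        simp only [mem_filter, mem_range, mem_univ, true_and] at hb ⊢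
        exact ⟨Nat.lt_succ_of_le (hle b), hb⟩
      rw [← sum_fiberwise_of_maps_to hmap]
      calc _ ≤ ∑ s ∈ (range (n+1)).filter (fun s => ¬ B s), (d:ℝ)^n * ρ ^ s := by
            refine sum_le_sum fun s hs => ?_
            simp only [mem_filter, mem_range] at hs
            obtain ⟨h1, h2, h3⟩ := hf2 s (by omega) hs.2
            calc _ = ∑ b ∈ (univ.filter (fun b : Fin n → Fin d => ¬ B (agr a b).card)).filter
                      (fun b => (agr a b).card = s), f s := by
                  refine sum_congr rfl fun b hb => ?_
                  rw [(mem_filter.1 hb).2]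
              _ ≤ ((n.choose s * d ^ (n - s) : ℕ) : ℝ) * f s := by
                  rw [sum_const, nsmul_eq_mul]
                  apply mul_le_mul_of_nonneg_right _ h2
                  have := card_agr_eq a s
                  refine le_trans ?_ (Nat.cast_le.2 this)
                  refine Nat.cast_le.2 (card_le_card ?_)
                  intro b hb
                  simp only [mem_filter, mem_univ, true_and] at hb ⊢
                  exact hb.2
              _ = (d:ℝ)^n * ((n.choose s : ℝ) / d ^ s * f s) := by
                  have : (d:ℝ)^n = d ^ (n - s) * d ^ s := by
                    rw [← pow_add]; congr 1; omega
                  rw [this]; push_cast; field_simp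
              _ ≤ _ := by gcongr
        _ ≤ ∑ s ∈ (range (n+1)).image (· + 1), (d:ℝ)^n * ρ ^ s := by
            apply sum_le_sum_of_subset_of_nonneg
            · intro s hs
              simp only [mem_filter, mem_range] at hs
              have := (hf2 s (by omega) hs.2).1
              rw [mem_image]
              exact ⟨s - 1, by rw [mem_range]; omega, by omega⟩
            · intros; positivity
        _ = (d:ℝ)^n * (ρ * ∑ s ∈ range (n+1), ρ ^ s) := by
            rw [sum_image (by intro x _ y _ h; simpa using h), mul_sum, mul_sum]
            refine sum_congr rfl fun s _ => ?_
            ring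
        _ ≤ _ := by
            have : ∑ s ∈ range (n+1), ρ ^ s ≤ (1 - ρ)⁻¹ := by
              rw [← tsum_geometric_of_lt_one hρ hρ1]
              exact (summable_geometric_of_lt_one hρ hρ1).sum_le_tsum _ (fun _ _ => by positivity)
            rw [div_eq_mul_inv]
            gcongr
  calc _ ≤ ∑ a : Fin n → Fin d, (d:ℝ) ^ n * (M + ρ / (1 - ρ)) := sum_le_sum fun a _ => key a
    _ = _ := by simp; ring

end RB

namespace RB
open Finset

lemma choose_ratio (s n k : ℕ) (hs : s ≤ n) (hk : k ≤ n) (hn : 0 < n) :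
    (s.choose k : ℝ) / n.choose k ≤ ((s : ℝ) / n) ^ k := by
  have key : ∀ k, s.descFactorial k * n ^ k ≤ n.descFactorial k * s ^ k := by
    intro k
    induction k with
    | zero => simp
    | succ k ih =>
      rw [Nat.descFactorial_succ, Nat.descFactorial_succ, pow_succ, pow_succ]
      have h2 : (s - k) * n ≤ (n - k) * s := by
        rcases Nat.lt_or_ge s k with h | h
        · simp [Nat.sub_eq_zero_of_le h.le]
        · obtain ⟨t, rfl⟩ := Nat.exists_eq_add_of_le h
          obtain ⟨w, rfl⟩ := Nat.exists_eq_add_of_le hs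
          have : k + t + w - k = t + w := by omega
          rw [this]
          simp only [Nat.add_sub_cancel_left]
          nlinarith [Nat.zero_le (k * w)]
      calc (s - k) * s.descFactorial k * (n ^ k * n) = ((s - k) * n) * (s.descFactorial k * n ^ k) := by ring
        _ ≤ ((n - k) * s) * (n.descFactorial k * s ^ k) := Nat.mul_le_mul h2 ih
        _ = _ := by ring
  have h := key k
  rw [Nat.descFactorial_eq_factorial_mul_choose, Nat.descFactorial_eq_factorial_mul_choose,
    mul_assoc, mul_assoc] at h
  have h' := Nat.le_of_mul_le_mul_left h (Nat.factorial_pos k)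
  have h0 : (0:ℝ) < n.choose k := by exact_mod_cast Nat.choose_pos hk
  have hn' : (0:ℝ) < n := by exact_mod_cast hn
  rw [div_pow, div_le_div_iff₀ h0 (by positivity)]
  have : (s.choose k : ℝ) * n ^ k ≤ n.choose k * s ^ k := by exact_mod_cast h'
  linarith

lemma log_mono (k : ℕ) (c : ℝ) (hc : 0 ≤ c) (hck : c ≤ k - 1) (x : ℝ) (hx : 0 < x) (hx1 : x ≤ 1) :
    Real.log (1 + x ^ k * c) ≤ x * Real.log (1 + c) := by
  have hder : ∀ y : ℝ, 0 < y → HasDerivAt (fun x : ℝ => Real.log (1 + x ^ k * c) / x)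
      ((((k * y ^ (k - 1) * c) / (1 + y ^ k * c)) * y - Real.log (1 + y ^ k * c) * 1) / y ^ 2) y := by
    intro y hy
    have hpos : 0 < 1 + y ^ k * c := by positivity
    have h1 : HasDerivAt (fun x : ℝ => 1 + x ^ k * c) (k * y ^ (k - 1) * c) y :=
      ((hasDerivAt_pow k y).mul_const c).const_add 1
    exact (h1.log hpos.ne').div (hasDerivAt_id y) hy.ne'
  have hk1 : 1 ≤ k := by
    have : (1:ℝ) ≤ k := by linarith
    exact_mod_cast this
  have hmono : MonotoneOn (fun x : ℝ => Real.log (1 + x ^ k * c) / x) (Set.Ioc 0 1) := by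
    apply monotoneOn_of_deriv_nonneg (convex_Ioc 0 1)
    · intro y hy
      exact (hder y hy.1).continuousAt.continuousWithinAt
    · intro y hy
      rw [interior_Ioc] at hy
      exact (hder y hy.1).differentiableAt.differentiableWithinAt
    · intro y hy
      rw [interior_Ioc] at hy
      rw [(hder y hy.1).deriv]
      have hy0 := hy.1
      apply div_nonneg _ (by positivity)
      set z := y ^ k * c with hz
      have hz0 : 0 ≤ z := by positivity
      have hyk : y ^ k ≤ 1 := pow_le_one₀ hy.1.le hy.2.le
      have hz1 : z ≤ k - 1 := by nlinarith
      have hl : Real.log (1 + z) ≤ z := by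
        have := Real.log_le_sub_one_of_pos (x := 1 + z) (by positivity); linarith
      have : (k * y ^ (k - 1) * c) / (1 + z) * y = k * z / (1 + z) := by
        have : y ^ k = y ^ (k - 1) * y := by rw [← pow_succ]; congr 1; omega
        rw [hz, this]; ring
      rw [this, mul_one, sub_nonneg]
      refine hl.trans ?_
      rw [le_div_iff₀ (by positivity)]
      nlinarith
  have := hmono ⟨hx, hx1⟩ ⟨one_pos, le_rfl⟩ hx1
  simp only [one_pow, one_mul, div_one] at this
  rw [div_le_iff₀ hx] at this
  linarith

lemma choose_div_le (n s d : ℕ) (hs : 1 ≤ s) (hd : 0 < d) :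
    (n.choose s : ℝ) / d ^ s ≤ (Real.exp 1 * n / (s * d)) ^ s := by
  have hs' : (0:ℝ) < s := by exact_mod_cast hs
  have hd' : (0:ℝ) < d := by exact_mod_cast hd
  have h1 : (n.choose s : ℝ) ≤ (n:ℝ) ^ s / s.factorial := Nat.choose_le_pow_div s n
  have h2 := Real.pow_div_factorial_le_exp (x := s) hs'.le s
  have h3 : (0:ℝ) < s.factorial := by exact_mod_cast Nat.factorial_pos s
  have h4 : (1:ℝ) / s.factorial ≤ (Real.exp 1 / s) ^ s := by
    rw [div_pow, ← Real.exp_nat_mul, mul_one, div_le_div_iff₀ h3 (by positivity)]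
    rw [div_le_iff₀ h3] at h2
    linarith
  calc (n.choose s : ℝ) / d ^ s ≤ ((n:ℝ) ^ s / s.factorial) / d ^ s := by gcongr
    _ = (n:ℝ) ^ s / d ^ s * (1 / s.factorial) := by ring
    _ ≤ (n:ℝ) ^ s / d ^ s * (Real.exp 1 / s) ^ s := by gcongr
    _ = _ := by rw [← div_pow, ← mul_pow]; congr 1; field_simp

/-- the geometric ratio -/
noncomputable def rho (α β r c ε : ℝ) (n : ℕ) : ℝ :=
  Real.exp (1 + c) * (n:ℝ) ^ (-((α - β) / 2))
    + Real.exp (1 + Real.log (1 + c)) / ε * (n:ℝ) ^ (r * Real.log (1 + c) - α)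

lemma term_bound (k n s d m : ℕ) (hk : 2 ≤ k) (α β r c ε : ℝ) (hc : 0 ≤ c) (hck : c ≤ k - 1)
    (hr : 0 < r) (hε : 0 < ε) (hεs : r * c * ε ^ (k - 1) ≤ (α - β) / 2) (hs : 1 ≤ s) (hsn : s ≤ n)
    (hd : (n:ℝ) ^ α ≤ d) (hm : (m:ℝ) ≤ r * n * Real.log n + 1)
    (hx : (n:ℝ) ^ (-β) < (s:ℝ) / n) :
    (n.choose s : ℝ) / d ^ s * (1 + ((s:ℝ) / n) ^ k * c) ^ m ≤ rho α β r c ε n ^ s := by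
  have hn : 1 ≤ n := hs.trans hsn
  have hn' : (0:ℝ) < n := by exact_mod_cast hn
  have hn1 : (1:ℝ) ≤ n := by exact_mod_cast hn
  have hs' : (0:ℝ) < s := by exact_mod_cast hs
  have hs1 : (1:ℝ) ≤ s := by exact_mod_cast hs
  have hsn' : (s:ℝ) ≤ n := by exact_mod_cast hsn
  have hnα : 0 < (n:ℝ) ^ α := by positivity
  have hd' : (0:ℝ) < d := hnα.trans_le hd
  have hd0 : 0 < d := by exact_mod_cast hd'
  have hlog : 0 ≤ Real.log n := Real.log_nonneg hn1
  have hL : 0 ≤ Real.log (1 + c) := Real.log_nonneg (by linarith)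
  set x : ℝ := (s:ℝ) / n with hxdef
  have hx0 : 0 < x := by positivity
  have hx1 : x ≤ 1 := by rw [hxdef, div_le_one hn']; exact hsn'
  have hxn : x * n = s := by rw [hxdef]; field_simp
  have hrp : ∀ t : ℝ, Real.exp (t * Real.log n) = (n:ℝ) ^ t := by
    intro t; rw [Real.rpow_def_of_pos hn', mul_comm]
  have hch := choose_div_le n s d hs hd0
  have hch2 : Real.exp 1 * n / (s * d) ≤ Real.exp 1 * (1 / x) * (n:ℝ) ^ (-α) := by
    rw [Real.rpow_neg hn'.le]
    have : Real.exp 1 * n / (s * d) = Real.exp 1 * (1 / x) * (d:ℝ)⁻¹ := by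
      rw [hxdef]; field_simp
    rw [this]; gcongr
  have hsum : ∀ A : ℝ, 0 ≤ A → (Real.exp 1 * (1 / x) * (n:ℝ) ^ (-α)) * A ≤ rho α β r c ε n →
      (1 + x ^ k * c) ^ m ≤ A ^ s →
      (n.choose s : ℝ) / d ^ s * (1 + x ^ k * c) ^ m ≤ rho α β r c ε n ^ s := by
    intro A hA h1 h2
    calc _ ≤ (Real.exp 1 * (1 / x) * (n:ℝ) ^ (-α)) ^ s * A ^ s := by
          apply mul_le_mul (hch.trans _) h2 (by positivity) (by positivity)
          gcongr
      _ = ((Real.exp 1 * (1 / x) * (n:ℝ) ^ (-α)) * A) ^ s := by rw [mul_pow _ A]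
      _ ≤ _ := by gcongr
  rcases le_or_gt x ε with hxe | hxe
  · apply hsum (Real.exp c * (n:ℝ) ^ ((α - β) / 2)) (by positivity)
    · have h1 : 1 / x ≤ (n:ℝ) ^ β := by
        rw [div_le_iff₀ hx0]
        have : (n:ℝ) ^ β * (n:ℝ) ^ (-β) = 1 := by
          rw [← Real.rpow_add hn']; simp
        rw [← this]; gcongr
      calc _ ≤ Real.exp 1 * (n:ℝ) ^ β * (n:ℝ) ^ (-α) * (Real.exp c * (n:ℝ) ^ ((α - β) / 2)) := by
            gcongr
        _ = Real.exp (1 + c) * ((n:ℝ) ^ β * (n:ℝ) ^ (-α) * (n:ℝ) ^ ((α - β) / 2)) := by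
            rw [Real.exp_add]; ring
        _ = Real.exp (1 + c) * (n:ℝ) ^ (-((α - β) / 2)) := by
            rw [← Real.rpow_add hn', ← Real.rpow_add hn']; congr 2; ring
        _ ≤ _ := by
            unfold rho
            have : 0 ≤ Real.exp (1 + Real.log (1 + c)) / ε * (n:ℝ) ^ (r * Real.log (1 + c) - α) := by
              positivity
            linarith
    · rw [← hrp, ← Real.exp_add, ← Real.exp_nat_mul]
      have h1 : 1 + x ^ k * c ≤ Real.exp (x ^ k * c) := by
        have := Real.add_one_le_exp (x ^ k * c); linarith
      refine (pow_le_pow_left₀ (by positivity) h1 m).trans ?_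
      rw [← Real.exp_nat_mul]
      apply Real.exp_le_exp.2
      have hxk : x ^ k = x ^ (k - 1) * x := by rw [← pow_succ]; congr 1; omega
      have hxk1 : x ^ k ≤ 1 := pow_le_one₀ hx0.le hx1
      have hxk2 : x ^ (k - 1) ≤ ε ^ (k - 1) := by gcongr
      calc (m:ℝ) * (x ^ k * c) ≤ (r * n * Real.log n + 1) * (x ^ k * c) := by gcongr
        _ = s * (r * c * x ^ (k - 1) * Real.log n) + x ^ k * c := by
            rw [← hxn, hxk]; ring
        _ ≤ s * (r * c * ε ^ (k - 1) * Real.log n) + s * c := by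
            gcongr
            linarith
        _ ≤ s * ((α - β) / 2 * Real.log n) + s * c := by gcongr
        _ = _ := by ring
  · apply hsum (Real.exp (Real.log (1 + c)) * (n:ℝ) ^ (r * Real.log (1 + c))) (by positivity)
    · have h1 : 1 / x ≤ 1 / ε := by gcongr
      calc _ ≤ Real.exp 1 * (1 / ε) * (n:ℝ) ^ (-α) *
              (Real.exp (Real.log (1 + c)) * (n:ℝ) ^ (r * Real.log (1 + c))) := by
            gcongr
        _ = Real.exp (1 + Real.log (1 + c)) / ε * ((n:ℝ) ^ (r * Real.log (1 + c)) * (n:ℝ) ^ (-α)) := by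
            rw [Real.exp_add 1]; ring
        _ = Real.exp (1 + Real.log (1 + c)) / ε * (n:ℝ) ^ (r * Real.log (1 + c) - α) := by
            rw [← Real.rpow_add hn']; rfl
        _ ≤ _ := by
            unfold rho
            have : 0 ≤ Real.exp (1 + c) * (n:ℝ) ^ (-((α - β) / 2)) := by positivity
            linarith
    · rw [← hrp, ← Real.exp_add, ← Real.exp_nat_mul]
      have h1 : 1 + x ^ k * c ≤ Real.exp (x * Real.log (1 + c)) := by
        rw [← Real.log_le_iff_le_exp (by positivity)]
        exact log_mono k c hc hck x hx0 hx1
      refine (pow_le_pow_left₀ (by positivity) h1 m).trans ?_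
      rw [← Real.exp_nat_mul]
      apply Real.exp_le_exp.2
      calc (m:ℝ) * (x * Real.log (1 + c)) ≤ (r * n * Real.log n + 1) * (x * Real.log (1 + c)) := by gcongr
        _ = s * (r * Real.log (1 + c) * Real.log n) + x * Real.log (1 + c) := by
            rw [← hxn]; ring
        _ ≤ s * (r * Real.log (1 + c) * Real.log n) + s * Real.log (1 + c) := by
            gcongr
            linarith
        _ = _ := by ring

open Filter Topology

lemma rpow_neg_tendsto (γ : ℝ) (hγ : γ < 0) :
    Tendsto (fun n : ℕ => (n:ℝ) ^ γ) atTop (𝓝 0) := by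
  have := (tendsto_rpow_neg_atTop (y := -γ) (by linarith)).comp tendsto_natCast_atTop_atTop
  simpa [Function.comp_def] using this

lemma rho_tendsto (α β r c ε : ℝ) (h1 : β < α) (h2 : r * Real.log (1 + c) < α) :
    Tendsto (rho α β r c ε) atTop (𝓝 0) := by
  have e1 := (rpow_neg_tendsto (-((α - β) / 2)) (by linarith)).const_mul (Real.exp (1 + c))
  have e2 := (rpow_neg_tendsto (r * Real.log (1 + c) - α) (by linarith)).const_mul
    (Real.exp (1 + Real.log (1 + c)) / ε)
  have := e1.add e2
  simp only [mul_zero, add_zero] at this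
  exact this

lemma E_tendsto (r γ : ℝ) (hγ : 1 < γ) :
    Tendsto (fun n : ℕ => (r * n * Real.log n + 1) * (n:ℝ) ^ (-γ)) atTop (𝓝 0) := by
  have e1 := (isLittleO_log_rpow_atTop (r := γ - 1) (by linarith)).tendsto_div_nhds_zero
  have e1' := (e1.comp tendsto_natCast_atTop_atTop).const_mul r
  have e2 := rpow_neg_tendsto (-γ) (by linarith)
  have := e1'.add e2
  rw [mul_zero, add_zero] at this
  refine this.congr' ?_
  filter_upwards [eventually_ge_atTop 1] with n hn
  have hn' : (0:ℝ) < n := by exact_mod_cast hn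
  simp only [Function.comp]
  rw [Real.rpow_sub_one hn'.ne', Real.rpow_neg hn'.le]
  field_simp

end RB

namespace RB
open Finset

set_option maxHeartbeats 2000000 in
lemma upper (k n d q m : ℕ) (hk : 2 ≤ k) (hkn : k ≤ n) (α β r p c ε : ℝ) (hp0 : 0 < p) (hp1 : p < 1)
    (hc : c = p / (1 - p)) (hck : c ≤ k - 1)
    (hr : 0 < r) (hε : 0 < ε) (hεs : r * c * ε ^ (k - 1) ≤ (α - β) / 2)
    (hd : (n:ℝ) ^ α ≤ d) (hm : (m:ℝ) ≤ r * n * Real.log n + 1)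
    (hq0 : p * (d:ℝ) ^ k ≤ q) (hq1 : (q:ℝ) ≤ p * (d:ℝ) ^ k + 1)
    (hD : 2 / (1 - p) ≤ (n:ℝ) ^ (α * k)) (hρ1 : rho α β r c ε n < 1) :
    1 ≤ expNsq k n d q m / expN k n d q m ^ 2 ∧
    expNsq k n d q m / expN k n d q m ^ 2 ≤
      Real.exp ((r * n * Real.log n + 1) * (n:ℝ) ^ (-(α * k)) * (2 / (1 - p) ^ 2)) *
      (Real.exp ((r * n * Real.log n + 1) * (n:ℝ) ^ (-(β * k)) * c)
        + rho α β r c ε n / (1 - rho α β r c ε n)) := by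
  have hn : 1 ≤ n := by omega
  have hn' : (0:ℝ) < n := by exact_mod_cast hn
  have hn1 : (1:ℝ) ≤ n := by exact_mod_cast hn
  have hlog : 0 ≤ Real.log n := Real.log_nonneg hn1
  have hp : 0 < 1 - p := by linarith
  have hc0 : 0 ≤ c := by rw [hc]; positivity
  have hnα : 0 < (n:ℝ) ^ α := by positivity
  have hd' : (0:ℝ) < d := hnα.trans_le hd
  have hd0 : 0 < d := by exact_mod_cast hd'
  have hDn : (n:ℝ) ^ (α * k) ≤ (d:ℝ) ^ k := by
    rw [Real.rpow_mul hn'.le, Real.rpow_natCast]; gcongr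
  have hnk : 0 < (n:ℝ) ^ (α * k) := by positivity
  have hDp : 0 < (d:ℝ) ^ k := by positivity
  have hD2 : 2 ≤ (1 - p) * (d:ℝ) ^ k := by
    have := hD.trans hDn
    rw [div_le_iff₀ hp] at this; linarith
  have hqD : (q:ℝ) < (d:ℝ) ^ k := by nlinarith
  have hqD' : q < d ^ k := by exact_mod_cast hqD
  have hDD : 2 ≤ d ^ k := by
    have : (2:ℝ) ≤ (d:ℝ) ^ k := by nlinarith
    exact_mod_cast this
  obtain ⟨u, hu⟩ : ∃ u : ℝ, u = 1 - (q:ℝ) / (d ^ k : ℕ) := ⟨_, rfl⟩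
  have hu' : u = 1 - (q:ℝ) / (d:ℝ) ^ k := by rw [hu]; push_cast; rfl
  have huD : u * (d:ℝ) ^ k = (d:ℝ) ^ k - q := by rw [hu']; field_simp
  have hu1 : u ≤ 1 - p := by
    have : u * (d:ℝ) ^ k ≤ (1 - p) * (d:ℝ) ^ k := by rw [huD]; linarith
    exact le_of_mul_le_mul_right this hDp
  have hu2 : (1 - p) / 2 ≤ u := by
    have : (1 - p) / 2 * (d:ℝ) ^ k ≤ u * (d:ℝ) ^ k := by rw [huD]; linarith
    exact le_of_mul_le_mul_right this hDp
  have hu0 : 0 < u := by linarith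
  have hEN := expN_eq k n d q m hkn hqD'
  rw [← hu] at hEN
  have hENpos : 0 < expN k n d q m := by rw [hEN]; positivity
  have hcard : 0 < Fintype.card (Instance k n d q m) := by
    rw [card_instance]
    exact pow_pos (Nat.mul_pos (Nat.choose_pos hkn) (Nat.choose_pos hqD'.le)) m
  constructor
  · rw [le_div_iff₀ (by positivity), one_mul]
    exact sq_le k n d q m hcard
  set δ : ℝ := 1 / u - 1 - c with hδ
  have hδ' : δ = (1 - p - u) / (u * (1 - p)) := by
    rw [hδ, hc]; field_simp; ring
  have hδ0 : 0 ≤ δ := by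
    rw [hδ']; apply div_nonneg <;> [linarith; positivity]
  have hδ1 : δ ≤ (n:ℝ) ^ (-(α * k)) * (2 / (1 - p) ^ 2) := by
    have h1 : 1 - p - u ≤ 1 / (n:ℝ) ^ (α * k) := by
      have : 1 - p - u ≤ 1 / (d:ℝ) ^ k := by
        rw [le_div_iff₀ hDp]; nlinarith
      exact this.trans (by gcongr)
    rw [hδ', Real.rpow_neg hn'.le]
    calc (1 - p - u) / (u * (1 - p)) ≤ (1 / (n:ℝ) ^ (α * k)) / ((1 - p) / 2 * (1 - p)) := by
          gcongr
      _ = _ := by field_simp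
  have hE0 : 0 ≤ r * n * Real.log n + 1 := by positivity
  have hfac : (1 + δ) ^ m ≤
      Real.exp ((r * n * Real.log n + 1) * (n:ℝ) ^ (-(α * k)) * (2 / (1 - p) ^ 2)) := by
    have h1 : 1 + δ ≤ Real.exp δ := by have := Real.add_one_le_exp δ; linarith
    refine (pow_le_pow_left₀ (by positivity) h1 m).trans ?_
    rw [← Real.exp_nat_mul]
    apply Real.exp_le_exp.2
    rw [mul_assoc]
    gcongr
  have hρ0 : 0 ≤ rho α β r c ε n := by unfold rho; positivity
  have hsplit := sum_split (n := n) (d := d) hd0 (fun s => (1 + ((s:ℝ) / n) ^ k * c) ^ m)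
    (Real.exp ((r * n * Real.log n + 1) * (n:ℝ) ^ (-(β * k)) * c)) (rho α β r c ε n) hρ0 hρ1
    (Real.exp_pos _).le (fun s => (s:ℝ) / n ≤ (n:ℝ) ^ (-β))
    (by
      intro s hs hB
      have h1 : 1 + ((s:ℝ) / n) ^ k * c ≤ Real.exp (((s:ℝ) / n) ^ k * c) := by
        have := Real.add_one_le_exp (((s:ℝ) / n) ^ k * c); linarith
      refine (pow_le_pow_left₀ (by positivity) h1 m).trans ?_
      rw [← Real.exp_nat_mul]
      apply Real.exp_le_exp.2
      rw [mul_assoc]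
      have : (n:ℝ) ^ (-(β * k)) = ((n:ℝ) ^ (-β)) ^ k := by
        rw [← Real.rpow_natCast ((n:ℝ) ^ (-β)), ← Real.rpow_mul hn'.le]; congr 1; ring
      rw [this]
      gcongr)
    (by
      intro s hs hB
      rw [not_le] at hB
      have hs1 : 1 ≤ s := by
        by_contra h
        have : s = 0 := by omega
        subst this
        simp only [Nat.cast_zero, zero_div] at hB
        have : 0 < (n:ℝ) ^ (-β) := by positivity
        linarith
      exact ⟨hs1, by positivity,
        term_bound k n s d m hk α β r c ε hc0 hck hr hε hεs hs1 hs hd hm hB⟩)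
  have hnsq := expNsq_le k n d q m hkn hqD' hDD u hu hu0
  have hsum : ∑ a : Fin n → Fin d, ∑ b : Fin n → Fin d,
      (1 + ((agr a b).card.choose k : ℝ) / n.choose k * (1 / u - 1)) ^ m
      ≤ (1 + δ) ^ m * ∑ a : Fin n → Fin d, ∑ b : Fin n → Fin d,
        (1 + (((agr a b).card : ℝ) / n) ^ k * c) ^ m := by
    rw [mul_sum]
    refine sum_le_sum fun a _ => ?_
    rw [mul_sum]
    refine sum_le_sum fun b _ => ?_
    have hle : (agr a b).card ≤ n := by simpa using card_le_univ (agr a b)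
    have h1 := choose_ratio (agr a b).card n k hle hkn hn
    have h2 : (((agr a b).card : ℝ) / n) ^ k ≤ 1 := by
      apply pow_le_one₀ (by positivity)
      rw [div_le_one hn']; exact_mod_cast hle
    have h3 : 1 / u - 1 = c + δ := by rw [hδ]; ring
    rw [h3, ← mul_pow]
    set σ := ((agr a b).card.choose k : ℝ) / n.choose k with hσ
    have hσ0 : 0 ≤ σ := by positivity
    set y := (((agr a b).card : ℝ) / n) ^ k with hy
    apply pow_le_pow_left₀ (by positivity)
    have hy0 : 0 ≤ y := by positivity
    have e1 : σ * c ≤ y * c := by gcongr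
    have e2 : σ * δ ≤ 1 * δ := by gcongr; linarith
    have e3 : 0 ≤ δ * (y * c) := by positivity
    linarith [mul_add σ c δ, e1, e2, e3, show (1 + δ) * (1 + y * c) = 1 + δ + y * c + δ * (y * c) by ring]
  rw [div_le_iff₀ (by positivity)]
  have hEsq : expN k n d q m ^ 2 = u ^ (2 * m) * (d:ℝ) ^ (2 * n) := by
    rw [hEN]; ring
  rw [hEsq]
  have hrest : 0 ≤ Real.exp ((r * n * Real.log n + 1) * (n:ℝ) ^ (-(β * k)) * c)
        + rho α β r c ε n / (1 - rho α β r c ε n) := by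
    have : 0 ≤ rho α β r c ε n / (1 - rho α β r c ε n) := div_nonneg hρ0 (by linarith)
    positivity
  calc _ ≤ u ^ (2 * m) * ((1 + δ) ^ m * ((d:ℝ) ^ (2 * n) *
        (Real.exp ((r * n * Real.log n + 1) * (n:ℝ) ^ (-(β * k)) * c)
        + rho α β r c ε n / (1 - rho α β r c ε n)))) := by
        refine hnsq.trans ?_
        gcongr
        refine hsum.trans ?_
        gcongr
    _ = (1 + δ) ^ m * (Real.exp ((r * n * Real.log n + 1) * (n:ℝ) ^ (-(β * k)) * c)
        + rho α β r c ε n / (1 - rho α β r c ε n)) * (u ^ (2 * m) * (d:ℝ) ^ (2 * n)) := by ring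
    _ ≤ _ := by gcongr

end RB

open Filter Topology

/-- **Second moment method for model RB below the threshold**: for an integer `k ≥ 2` and
real constants `α > 1/k`, `r > 0`, `0 < p ≤ (k-1)/k` with `r < r_cr = -α / ln (1-p)`,
the ratio `E[N²]/E[N]²` of the moments of the number `N` of satisfying assignments of
a random `RB(k,n,α,r,p)` instance tends to `1` as `n → ∞`. -/
theorem rb_second_moment_ratio (k : ℕ) (hk : 2 ≤ k) (α r p : ℝ)
    (hα : 1 / (k : ℝ) < α) (hr : 0 < r) (hp0 : 0 < p) (hp1 : p ≤ ((k : ℝ) - 1) / k)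
    (hrcr : r < -α / Real.log (1 - p)) :
    Tendsto
      (fun n : ℕ =>
        RB.expNsq k n (RB.dOf α n) (RB.qOf p k (RB.dOf α n)) (RB.mOf r n) /
          (RB.expN k n (RB.dOf α n) (RB.qOf p k (RB.dOf α n)) (RB.mOf r n)) ^ 2)
      atTop (𝓝 1) := by
  have hk0 : (0:ℝ) < k := by positivity
  have hp1' : p < 1 := by
    have : ((k:ℝ) - 1) / k < 1 := by rw [div_lt_one hk0]; linarith
    linarith
  have hp : 0 < 1 - p := by linarith
  have hα0 : 0 < α := lt_trans (by positivity) hα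
  obtain ⟨c, hc⟩ : ∃ c, c = p / (1 - p) := ⟨_, rfl⟩
  have hc0 : 0 < c := by rw [hc]; positivity
  have hck : c ≤ k - 1 := by
    rw [hc, div_le_iff₀ hp]
    rw [le_div_iff₀ hk0] at hp1
    linarith
  have hL : Real.log (1 + c) = -Real.log (1 - p) := by
    rw [← Real.log_inv, hc]; congr 1; field_simp; ring
  have hneg : Real.log (1 - p) < 0 := Real.log_neg hp (by linarith)
  have hrL : r * Real.log (1 + c) < α := by
    rw [hL]
    rw [lt_div_iff_of_neg hneg] at hrcr
    linarith
  obtain ⟨β, hβ1, hβ2⟩ := exists_between hα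
  have hβk : 1 < β * k := by rwa [div_lt_iff₀ hk0] at hβ1
  have hαk : 1 < α * k := by rwa [div_lt_iff₀ hk0] at hα
  obtain ⟨ε, hε, hεs⟩ : ∃ ε : ℝ, 0 < ε ∧ r * c * ε ^ (k - 1) ≤ (α - β) / 2 := by
    have hpos : 0 < (α - β) / 2 / (r * c) := by
      have : 0 < α - β := by linarith
      positivity
    refine ⟨min 1 ((α - β) / 2 / (r * c)), lt_min one_pos hpos, ?_⟩
    have h1 : min 1 ((α - β) / 2 / (r * c)) ^ (k - 1) ≤ min 1 ((α - β) / 2 / (r * c)) :=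
      pow_le_of_le_one (lt_min one_pos hpos).le (min_le_left _ _) (by omega)
    calc _ ≤ r * c * ((α - β) / 2 / (r * c)) := by
          gcongr
          exact h1.trans (min_le_right _ _)
      _ = _ := by field_simp
  have hρ := RB.rho_tendsto α β r c ε hβ2 hrL
  have hU : Tendsto (fun n : ℕ =>
      Real.exp ((r * n * Real.log n + 1) * (n:ℝ) ^ (-(α * k)) * (2 / (1 - p) ^ 2)) *
      (Real.exp ((r * n * Real.log n + 1) * (n:ℝ) ^ (-(β * k)) * c)
        + RB.rho α β r c ε n / (1 - RB.rho α β r c ε n))) atTop (𝓝 1) := by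
    have e1 := (Real.continuous_exp.tendsto _).comp
      ((RB.E_tendsto r (α * k) hαk).mul_const (2 / (1 - p) ^ 2))
    have e2 := (Real.continuous_exp.tendsto _).comp ((RB.E_tendsto r (β * k) hβk).mul_const c)
    have e3 := hρ.div (hρ.const_sub 1) (by norm_num)
    have := e1.mul (e2.add e3)
    simpa [Function.comp_def] using this
  have hev : ∀ᶠ n : ℕ in atTop, k ≤ n ∧ 2 / (1 - p) ≤ (n:ℝ) ^ (α * k) ∧
      RB.rho α β r c ε n < 1 := by
    have h2 : Tendsto (fun n : ℕ => (n:ℝ) ^ (α * k)) atTop atTop :=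
      (tendsto_rpow_atTop (by linarith)).comp tendsto_natCast_atTop_atTop
    exact (eventually_ge_atTop k).and ((h2.eventually_ge_atTop _).and
      (hρ.eventually_lt_const one_pos))
  have hall : ∀ᶠ n : ℕ in atTop, _ := hev.mono fun n h =>
    RB.upper k n (RB.dOf α n) (RB.qOf p k (RB.dOf α n)) (RB.mOf r n) hk h.1 α β r p c ε hp0 hp1' hc
      hck hr hε hεs (Nat.le_ceil _)
      (Nat.ceil_lt_add_one (by
        have : 0 ≤ Real.log n := Real.log_natCast_nonneg n
        positivity)).le
      (Nat.le_ceil _) (Nat.ceil_lt_add_one (by positivity)).le h.2.1 h.2.2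
  exact tendsto_of_tendsto_of_tendsto_of_le_of_le' tendsto_const_nhds hU
    (hall.mono fun n h => h.1) (hall.mono fun n h => h.2)
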